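/- Let A be an n×n complex matrix with Ind(A) = k and suppose A has an m-core-EP inverse X. Let D be the Drazin inverse of A and let M be an m-core inverse of A^k. Then X = A^k D M. -/

import Mathlib

/-!
Both `A X` and `A^k M` are projectors onto the column space of `A^k` which are self-adjoint for the
Minkowski adjoint, and such a projector is unique: each of `P = A X`, `Q = A^k M` fixes the range
of the other, so `P = Q P` and `Q = P Q`, and taking adjoints (`madj_mul`) gives
`P = (Q P)~ = P Q = Q`. Hence `A X = A^k M`. Since the columns of `X` lie in the range of `A^k`,
where `D` inverts `A`, it follows that `X = D A X = D A^k M = A^k D M`.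
-/

open Matrix

noncomputable section

/-- The Minkowski metric matrix `G = diag(1, -1, …, -1)`. -/
def mink (n : ℕ) : Matrix (Fin n) (Fin n) ℂ :=
  Matrix.diagonal (fun i => if (i : ℕ) = 0 then 1 else -1)

/-- The Minkowski adjoint `A~ = G A* G`. -/
def madj {n : ℕ} (A : Matrix (Fin n) (Fin n) ℂ) : Matrix (Fin n) (Fin n) ℂ :=
  mink n * Aᴴ * mink n

/-- `k` is the index of `A`: the smallest positive integer with
`rank (A^(k+1)) = rank (A^k)`. -/
def IsInd {n : ℕ} (A : Matrix (Fin n) (Fin n) ℂ) (k : ℕ) : Prop :=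
  0 < k ∧ (A ^ (k + 1)).rank = (A ^ k).rank ∧
    ∀ j, 0 < j → (A ^ (j + 1)).rank = (A ^ j).rank → k ≤ j

/-- `X` is an m-core-EP inverse of `A` (with `Ind(A) = k`). -/
def IsMCoreEP {n : ℕ} (A X : Matrix (Fin n) (Fin n) ℂ) (k : ℕ) : Prop :=
  X * A * X = X ∧ X * A ^ (k + 1) = A ^ k ∧ madj (A * X) = A * X ∧
    ∃ Z : Matrix (Fin n) (Fin n) ℂ, X = A ^ k * Z

/-- `Y` is an m-core inverse of `B`. -/
def IsMCore {n : ℕ} (B Y : Matrix (Fin n) (Fin n) ℂ) : Prop :=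
  B * Y * B = B ∧ B * Y ^ 2 = Y ∧ madj (B * Y) = B * Y

lemma mink_mul_mink (n : ℕ) : mink n * mink n = 1 := by
  rw [mink, Matrix.diagonal_mul_diagonal, ← Matrix.diagonal_one]
  congr 1
  funext i
  split_ifs <;> norm_num

/-- The Minkowski adjoint reverses products, because the metric matrix squares to `1`. -/
lemma madj_mul {n : ℕ} (S T : Matrix (Fin n) (Fin n) ℂ) :
    madj (S * T) = madj T * madj S := by
  have h : mink n * Tᴴ * mink n * (mink n * Sᴴ * mink n)
      = mink n * Tᴴ * (mink n * mink n) * Sᴴ * mink n := by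
    simp only [mul_assoc]
  rw [madj, madj, madj, h, mink_mul_mink, Matrix.conjTranspose_mul, mul_one]
  simp only [mul_assoc]

/-- Minkowski-self-adjoint matrices that each fix the range of the other are equal. -/
lemma eq_of_madj_eq {n : ℕ} {P Q : Matrix (Fin n) (Fin n) ℂ} (hP : madj P = P)
    (hQ : madj Q = Q) (hQP : Q * P = P) (hPQ : P * Q = Q) : P = Q :=
  calc P = madj (Q * P) := by rw [hQP, hP]
    _ = P * Q := by rw [madj_mul, hP, hQ]
    _ = Q := hPQ

/-- The m-core-EP inverse equals `A^k D M` where `D` is the Drazin inverse of `A`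
and `M` is an m-core inverse of `A^k`. -/
theorem mCoreEP_eq_pow_drazin_mcore {n k : ℕ} (A X D M : Matrix (Fin n) (Fin n) ℂ)
    (hk : IsInd A k) (hX : IsMCoreEP A X k)
    (hD : A ^ k * D * A = A ^ k ∧ D * A * D = D ∧ A * D = D * A)
    (hM : IsMCore (A ^ k) M) :
    X = A ^ k * D * M := by
  obtain ⟨-, hX2, hX3, Z, hZ⟩ := hX
  obtain ⟨hD1, -, hD3⟩ := hD
  obtain ⟨hM1, -, hM3⟩ := hM
  have hc : A ^ k * D = D * A ^ k := (show Commute A D from hD3).pow_left k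
  have hAk : A ^ (k + 1) * D = A ^ k := by
    rw [pow_succ, mul_assoc, hD3, ← mul_assoc, hD1]
  have hDA : D * A * A ^ k = A ^ k := by
    rw [mul_assoc, ← pow_succ', pow_succ, ← mul_assoc, ← hc, hD1]
  have hPB : A * X * A ^ k = A ^ k := by
    calc A * X * A ^ k = A * (X * A ^ (k + 1)) * D := by
          rw [← mul_assoc A X, mul_assoc (A * X), hAk]
      _ = A ^ k := by rw [hX2, ← pow_succ', hAk]
  have hAX : A * X = A ^ k * (A * Z) := by
    rw [hZ, ← mul_assoc, ← mul_assoc, ← pow_succ, ← pow_succ']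
  have hPQ : A * X = A ^ k * M := by
    refine eq_of_madj_eq hX3 hM3 ?_ ?_
    · rw [hAX, ← mul_assoc, hM1]
    · rw [← mul_assoc, hPB]
  calc X = D * A * X := by rw [hZ, ← mul_assoc, hDA]
    _ = A ^ k * D * M := by rw [mul_assoc, hPQ, ← mul_assoc, hc]
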